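/- Let λ and μ be partitions with μ⊆λ, with conjugates λ'=(λ'_1,…,λ'_s) and μ'=(μ'_1,…,μ'_s) (zero parts allowed), and let s=(s_{ij})∈W^diag_{λ/μ} with common diagonal values a_k. Assume Re(s_{λ'_i,i})>1 for all 1≤i≤s. Then ζ_{λ/μ}(s) = det[ ζ(a_{−μ'_j+j−1}, a_{−μ'_j+j−2}, …, a_{−μ'_j+j−(λ'_i−μ'_j−i+j)}) ]_{1≤i,j≤s}, where the (i,j) entry is understood to be 1 if λ'_i−μ'_j−i+j=0 and 0 if λ'_i−μ'_j−i+j<0 (skew Jacobi–Trudi formula of E-type). -/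

import Mathlib

/-!
The identity is first proved for truncated sums, with entries at most `N` and arbitrary weights
`w c m` in place of `m ^ (-a_c)` on the diagonal `c`, by induction on `N`; then `N` tends to
infinity. A skew shape is described throughout by its column heights `α = λ'` over `β = μ'`.

*Truncated identity* (`sum_tabs_eq_det`). Removing the boxes with entry `N + 1` from a tableau
removes a horizontal strip, i.e. the bottom boxes of a set `T` of columns (`sum_tabs_fiber`). On the
determinant side, splitting each entry according to whether its largest summation index is `N + 1`
writes each row as a sum of two rows, and multilinearity gives a sum over all subsets `T`
(`det_truncMat_succ`). The subsets that are not horizontal strips contribute zero: either two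
adjacent rows coincide, or there is a block of zeros that is too large.

*Limit* (`tendsto_det`). Some entries of the matrix may diverge, because the diagram need not
contain boxes of all contents between `j - μ'_j` and `i - λ'_i + 1`. However, where a content is
missing the matrix is block triangular, so divergent entries only occur in terms of the Leibniz
expansion that contain a zero factor (`exists_box_of_perm`). The remaining entries converge
absolutely (`summable_mzv`), and the truncated identity applied to the real parts of the exponents
bounds the sum of the absolute values over all tableaux (`tsum_isTab_eq_det`).
-/

open scoped BigOperators

noncomputable section

namespace SMZ

/-- Box `(i,j)` (0-indexed) lies in the Young diagram of the partition `lam`. -/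
def InDiag (lam : ℕ → ℕ) (p : ℕ × ℕ) : Prop := p.2 < lam p.1

/-- `(i,j)` is a corner of the Young diagram of `lam`. -/
def IsCorner (lam : ℕ → ℕ) (p : ℕ × ℕ) : Prop :=
  InDiag lam p ∧ ¬ InDiag lam (p.1 + 1, p.2) ∧ ¬ InDiag lam (p.1, p.2 + 1)

/-- `lam` is the part function of a partition with exactly `r` positive parts. -/
def IsPartitionWith (r : ℕ) (lam : ℕ → ℕ) : Prop :=
  Antitone lam ∧ ∀ i, 0 < lam i ↔ i < r

/-- Semi-standard Young tableau of shape `lam`, normalized to be `0` off the diagram. -/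
structure IsSSYT (lam : ℕ → ℕ) (m : ℕ × ℕ → ℕ) : Prop where
  zero_off : ∀ p, ¬ InDiag lam p → m p = 0
  pos : ∀ p, InDiag lam p → 0 < m p
  row_le : ∀ i j, InDiag lam (i, j + 1) → m (i, j) ≤ m (i, j + 1)
  col_lt : ∀ i j, InDiag lam (i + 1, j) → m (i, j) < m (i + 1, j)

/-- The summand `1 / M^s` of the Schur multiple zeta series. -/
def term (r : ℕ) (lam : ℕ → ℕ) (s : ℕ × ℕ → ℂ) (m : ℕ × ℕ → ℕ) : ℂ :=
  ∏ i ∈ Finset.range r, ∏ j ∈ Finset.range (lam i), (m (i, j) : ℂ) ^ (-(s (i, j)))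

/-- The Schur multiple zeta function `ζ_λ(s)`. -/
def schurZeta (r : ℕ) (lam : ℕ → ℕ) (s : ℕ × ℕ → ℂ) : ℂ :=
  ∑' M : {m : ℕ × ℕ → ℕ // IsSSYT lam m}, term r lam s M.1

/-- The region `W_λ` of (sufficient) absolute convergence. -/
def MemW (lam : ℕ → ℕ) (s : ℕ × ℕ → ℂ) : Prop :=
  (∀ p, InDiag lam p → 1 ≤ (s p).re) ∧ ∀ p, IsCorner lam p → 1 < (s p).re

/-- Euler–Zagier multiple zeta function. -/
def mzv {n : ℕ} (s : Fin n → ℂ) : ℂ :=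
  ∑' f : {f : Fin n → ℕ // StrictMono f ∧ ∀ i, 0 < f i},
    ∏ i, (f.1 i : ℂ) ^ (-(s i))

/-- Euler–Zagier multiple zeta-star function. -/
def mzvStar {n : ℕ} (s : Fin n → ℂ) : ℂ :=
  ∑' f : {f : Fin n → ℕ // Monotone f ∧ ∀ i, 0 < f i},
    ∏ i, (f.1 i : ℂ) ^ (-(s i))

/-- `ζ⋆(a start, a (start+1), …)` with `len` terms; `1` if `len = 0`, `0` if `len < 0`. -/
def mzvStarSeq (a : ℤ → ℂ) (start len : ℤ) : ℂ :=
  if len < 0 then 0 else mzvStar fun i : Fin len.toNat => a (start + (i : ℕ))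

/-- `ζ(a start, a (start-1), …)` with `len` terms; `1` if `len = 0`, `0` if `len < 0`. -/
def mzvSeqDesc (a : ℤ → ℂ) (start len : ℤ) : ℂ :=
  if len < 0 then 0 else mzv fun i : Fin len.toNat => a (start - (i : ℕ))

/-- The conjugate partition: `conjPart r lam c` is the number of rows `i < r` with a box
in column `c`, i.e. the (0-indexed) `c`-th part of `λ'`. -/
def conjPart (r : ℕ) (lam : ℕ → ℕ) (c : ℕ) : ℕ :=
  ((Finset.range r).filter fun i => c < lam i).card

end SMZ
namespace SMZ

/-- Box `(i,j)` (0-indexed) lies in the skew Young diagram `λ/μ`. -/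
def InSkew (lam mu : ℕ → ℕ) (p : ℕ × ℕ) : Prop := mu p.1 ≤ p.2 ∧ p.2 < lam p.1

/-- `(i,j)` is a corner of the skew diagram `λ/μ`. -/
def IsSkewCorner (lam mu : ℕ → ℕ) (p : ℕ × ℕ) : Prop :=
  InSkew lam mu p ∧ ¬ InSkew lam mu (p.1 + 1, p.2) ∧ ¬ InSkew lam mu (p.1, p.2 + 1)

/-- `(lam, mu)` is a skew pair with at most `r` rows (zero parts allowed). -/
def IsSkewPairWith (r : ℕ) (lam mu : ℕ → ℕ) : Prop :=
  Antitone lam ∧ Antitone mu ∧ (∀ i, mu i ≤ lam i) ∧ ∀ i, r ≤ i → lam i = 0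

/-- Semi-standard Young tableau of skew shape `λ/μ`, normalized to be `0` off the diagram. -/
structure IsSkewSSYT (lam mu : ℕ → ℕ) (m : ℕ × ℕ → ℕ) : Prop where
  zero_off : ∀ p, ¬ InSkew lam mu p → m p = 0
  pos : ∀ p, InSkew lam mu p → 0 < m p
  row_le : ∀ i j, InSkew lam mu (i, j) → InSkew lam mu (i, j + 1) → m (i, j) ≤ m (i, j + 1)
  col_lt : ∀ i j, InSkew lam mu (i, j) → InSkew lam mu (i + 1, j) → m (i, j) < m (i + 1, j)

/-- The summand `1 / M^s` of the skew Schur multiple zeta series. -/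
def skewTerm (r : ℕ) (lam mu : ℕ → ℕ) (s : ℕ × ℕ → ℂ) (m : ℕ × ℕ → ℕ) : ℂ :=
  ∏ i ∈ Finset.range r, ∏ j ∈ Finset.Ico (mu i) (lam i), (m (i, j) : ℂ) ^ (-(s (i, j)))

/-- The skew Schur multiple zeta function `ζ_{λ/μ}(s)`. -/
def skewSchurZeta (r : ℕ) (lam mu : ℕ → ℕ) (s : ℕ × ℕ → ℂ) : ℂ :=
  ∑' M : {m : ℕ × ℕ → ℕ // IsSkewSSYT lam mu m}, skewTerm r lam mu s M.1

/-- The region `W_{λ/μ}` of (sufficient) absolute convergence. -/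
def MemWSkew (lam mu : ℕ → ℕ) (s : ℕ × ℕ → ℂ) : Prop :=
  (∀ p, InSkew lam mu p → 1 ≤ (s p).re) ∧ ∀ p, IsSkewCorner lam mu p → 1 < (s p).re

end SMZ
namespace SMZ.JacobiTrudi

/-! ### Truncated multiple zeta sums and the truncated determinant -/

/-- Generic-weight version of `ζ(a_c, a_{c-1}, …, a_{c-ℓ+1})` truncated at `m_ℓ ≤ N`, where `w c m`
plays the role of `m ^ (-a_c)`. It is given by its recursion in `N` (either `m_ℓ ≤ N`, or
`m_ℓ = N + 1`); the length `ℓ` is an integer and the value is `0` for `ℓ < 0`. -/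
def truncE (w : ℤ → ℕ → ℂ) : ℕ → ℤ → ℤ → ℂ
  | 0, _, l => if l = 0 then 1 else 0
  | N + 1, c, l => truncE w N c l + w (c - l + 1) (N + 1) * truncE w N c (l - 1)

lemma val_mem_map {n : ℕ} {T : Finset (Fin n)} {j : Fin n} :
    (j : ℕ) ∈ T.map Fin.valEmbedding ↔ j ∈ T :=
  Finset.mem_map' Fin.valEmbedding

lemma truncE_neg (w : ℤ → ℕ → ℂ) (N : ℕ) (c l : ℤ) (hl : l < 0) : truncE w N c l = 0 := by
  induction N generalizing l with
  | zero => simp [truncE, hl.ne]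
  | succ N ih => rw [truncE, ih l hl, ih (l - 1) (by omega)]; simp

/-- The truncated Jacobi–Trudi matrix of the skew shape with column heights `α` over `β`.
The heights `α` are integers so that the rows of negative height met when boxes are removed make
sense. -/
def truncMat (w : ℤ → ℕ → ℂ) (n N : ℕ) (α : ℕ → ℤ) (β : ℕ → ℕ) : Matrix (Fin n) (Fin n) ℂ :=
  Matrix.of fun i j => truncE w N ((j : ℕ) - β j) (α i - β j - (i : ℕ) + (j : ℕ))

lemma truncMat_congr (w : ℤ → ℕ → ℂ) (n N : ℕ) {α α' : ℕ → ℤ} (β : ℕ → ℕ)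
    (h : ∀ i < n, α i = α' i) : truncMat w n N α β = truncMat w n N α' β := by
  ext i j
  simp [truncMat, h i i.2]

/-- Multilinearity in the rows: passing from `N` to `N + 1` expands the determinant as a sum over
the set `T` of columns of the diagram that lose their bottom box. -/
lemma det_truncMat_succ (w : ℤ → ℕ → ℂ) (n N : ℕ) (α : ℕ → ℤ) (β : ℕ → ℕ) :
    (truncMat w n (N + 1) α β).det =
      ∑ T : Finset (Fin n), (∏ i ∈ T, w ((i : ℕ) - α i + 1) (N + 1)) *
        (truncMat w n N (fun i => α i - if i ∈ T.map Fin.valEmbedding then 1 else 0) β).det := by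
  let d : Fin n → ℂ := fun i => w ((i : ℕ) - α i + 1) (N + 1)
  let A : Fin n → Fin n → ℂ := fun i => truncMat w n N α β i
  let B : Fin n → Fin n → ℂ := fun i => truncMat w n N (fun k => α k - 1) β i
  have h0 : truncMat w n (N + 1) α β = Matrix.of ((fun i => d i • B i) + A) := by
    ext i j
    simp only [truncMat, truncE, Matrix.of_apply, d, A, B]
    rw [add_comm]
    congr 3 <;> ring_nf
  have h1 : ∀ C : Fin n → Fin n → ℂ, (Matrix.of C).det =
      (Matrix.detRowAlternating (R := ℂ) (n := Fin n)).toMultilinearMap C := fun _ => rfl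
  rw [h0, h1, MultilinearMap.map_add_univ]
  refine Finset.sum_congr rfl fun T _ => ?_
  have h2 : T.piecewise (fun i => d i • B i) A =
      T.piecewise (fun i => d i • (T.piecewise B A) i) (T.piecewise B A) := by
    ext i j
    by_cases hi : i ∈ T <;> simp [hi]
  rw [h2, MultilinearMap.map_piecewise_smul, smul_eq_mul, ← h1]
  congr 2
  ext i j
  simp only [Matrix.of_apply, truncMat, val_mem_map]
  by_cases hi : i ∈ T
  · rw [Finset.piecewise_eq_of_mem _ _ _ hi, if_pos hi]
    rfl
  · rw [Finset.piecewise_eq_of_notMem _ _ _ hi, if_neg hi, sub_zero]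
    rfl

/-- A permutation preserving an initial segment `{0, …, c}` of the index set cannot map an index
outside of it into it. -/
lemma perm_cut {n : ℕ} (σ : Equiv.Perm (Fin n)) (c : ℕ)
    (h : ∀ j : Fin n, (j : ℕ) ≤ c → (σ j : ℕ) ≤ c) (j : Fin n) (hj : (σ j : ℕ) ≤ c) :
    (j : ℕ) ≤ c := by
  let S : Finset (Fin n) := Finset.univ.filter fun j => (j : ℕ) ≤ c
  have hS : S.map σ.toEmbedding = S := by
    apply Finset.eq_of_subset_of_card_le
    · intro x hx
      simp only [Finset.mem_map_equiv, S, Finset.mem_filter, Finset.mem_univ, true_and] at hx ⊢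
      simpa using h _ hx
    · simp
  have : σ j ∈ S.map σ.toEmbedding := by rw [hS]; simp [S, hj]
  simpa [S] using this

/-- If `γ` does not contain `β` at column `i`, there is a block of zeros with rows
`≥ i` and columns `≤ i`, too large for a nonzero determinant. -/
lemma det_truncMat_eq_zero_of_lt (w : ℤ → ℕ → ℂ) (n N : ℕ) (γ : ℕ → ℤ) (β : ℕ → ℕ)
    (hβ : Antitone β) (i : ℕ) (hi : i < n) (h1 : γ i < β i)
    (h2 : ∀ k, i < k → k < n → γ k ≤ β i) : (truncMat w n N γ β).det = 0 := by
  rw [Matrix.det_apply]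
  refine Finset.sum_eq_zero fun σ _ => ?_
  suffices h : ∃ j : Fin n, (j : ℕ) ≤ i ∧ i ≤ (σ j : ℕ) by
    obtain ⟨j, hj, hσ⟩ := h
    rw [Finset.prod_eq_zero (Finset.mem_univ j), smul_zero]
    have hb := hβ hj
    apply truncE_neg
    rcases hσ.eq_or_lt with h | h
    · rw [← h]; omega
    · have := h2 _ h (σ j).2
      omega
  by_contra! hc
  have := perm_cut σ (i - 1)
  rcases Nat.eq_zero_or_pos i with rfl | hpos
  · simpa using hc ⟨0, hi⟩ le_rfl
  have h3 := perm_cut σ (i - 1) (fun j hj => by have := hc j (by omega); omega) ⟨i, hi⟩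
    (by have := hc ⟨i, hi⟩ le_rfl; omega)
  simp only at h3
  omega

/-! ### Truncated sums over skew tableaux, in terms of column heights -/

/-- `m` is a semistandard filling of the skew diagram whose column `j` consists of the rows
`β j ≤ i < α j`, normalized to be `0` off the diagram. -/
structure IsTab (α β : ℕ → ℕ) (m : ℕ × ℕ → ℕ) : Prop where
  zero_off : ∀ i j, ¬ (β j ≤ i ∧ i < α j) → m (i, j) = 0
  pos : ∀ i j, β j ≤ i → i < α j → 0 < m (i, j)
  row_le : ∀ i j, β j ≤ i → i < α j → β (j + 1) ≤ i → i < α (j + 1) → m (i, j) ≤ m (i, j + 1)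
  col_lt : ∀ i j, β j ≤ i → i + 1 < α j → m (i, j) < m (i + 1, j)

lemma finite_tabs (α β : ℕ → ℕ) (R n N : ℕ) :
    {m : ℕ × ℕ → ℕ | IsTab α β m ∧ (∀ p, m p ≤ N) ∧ ∀ p, m p ≠ 0 → p.1 < R ∧ p.2 < n}.Finite := by
  classical
  refine (Set.finite_range fun (g : Fin R × Fin n → Fin (N + 1)) (p : ℕ × ℕ) =>
    if h : p.1 < R ∧ p.2 < n then (g (⟨p.1, h.1⟩, ⟨p.2, h.2⟩) : ℕ) else 0).subset ?_
  rintro m ⟨-, h1, h2⟩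
  refine ⟨fun q => ⟨m (q.1, q.2), by have := h1 (q.1, q.2); omega⟩, ?_⟩
  ext p
  by_cases h : p.1 < R ∧ p.2 < n
  · simp [h]
  · simp only [h, dite_false]
    by_contra h'
    exact h (h2 p (Ne.symm h'))

/-- The tableaux with entries at most `N` and support in the `R × n` rectangle. -/
def tabs (α β : ℕ → ℕ) (R n N : ℕ) : Finset (ℕ × ℕ → ℕ) := (finite_tabs α β R n N).toFinset

lemma mem_tabs {α β : ℕ → ℕ} {R n N : ℕ} (hR : ∀ j, α j ≤ R) (hn : ∀ j, n ≤ j → α j = 0)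
    {m : ℕ × ℕ → ℕ} : m ∈ tabs α β R n N ↔ IsTab α β m ∧ ∀ p, m p ≤ N := by
  simp only [tabs, Set.Finite.mem_toFinset, Set.mem_ofPred_eq]
  refine ⟨fun h => ⟨h.1, h.2.1⟩, fun h => ⟨h.1, h.2, ?_⟩⟩
  rintro ⟨i, j⟩ hp
  by_contra hc
  refine hp (h.1.zero_off i j fun hb => hc ?_)
  have := hR j
  refine ⟨by simp only; omega, ?_⟩
  by_contra hj
  have := hn j (by simpa using hj)
  omega

/-- The weight of a filling, `w (j - i) (m (i, j))` multiplied over all boxes. -/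
def weight (w : ℤ → ℕ → ℂ) (n : ℕ) (α β : ℕ → ℕ) (m : ℕ × ℕ → ℕ) : ℂ :=
  ∏ j : Fin n, ∏ i ∈ Finset.Ico (β j) (α j), w ((j : ℕ) - (i : ℤ)) (m (i, j))

/-- Removing one box from the bottom of each column in `T`. -/
def shrink {n : ℕ} (α : ℕ → ℕ) (T : Finset (Fin n)) (j : ℕ) : ℕ :=
  α j - if j ∈ T.map Fin.valEmbedding then 1 else 0

lemma shrink_of_mem {n : ℕ} {α : ℕ → ℕ} {T : Finset (Fin n)} {j : ℕ}
    (h : j ∈ T.map Fin.valEmbedding) : shrink α T j = α j - 1 := by simp only [shrink, h, if_true]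

lemma shrink_of_notMem {n : ℕ} {α : ℕ → ℕ} {T : Finset (Fin n)} {j : ℕ}
    (h : j ∉ T.map Fin.valEmbedding) : shrink α T j = α j := by
  simp only [shrink, h, if_false, Nat.sub_zero]

open Classical in
/-- The set of columns of `m` containing the entry `N`. -/
def topCols (n N : ℕ) (m : ℕ × ℕ → ℕ) : Finset (Fin n) :=
  Finset.univ.filter fun j => ∃ i, m (i, (j : ℕ)) = N

lemma mem_topCols {n N : ℕ} {m : ℕ × ℕ → ℕ} {j : Fin n} :
    j ∈ topCols n N m ↔ ∃ i, m (i, (j : ℕ)) = N := by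
  simp [topCols]

/-- `T` is the set of columns of a horizontal strip that can be removed from the bottom of `α / β`:
the columns are nonempty, and together with a column `T` contains its right neighbour if that has
the same height. -/
structure Removable {n : ℕ} (α β : ℕ → ℕ) (T : Finset (Fin n)) : Prop where
  lt : ∀ j ∈ T.map Fin.valEmbedding, β j < α j
  next : ∀ j ∈ T.map Fin.valEmbedding, α j = α (j + 1) → j + 1 ∈ T.map Fin.valEmbedding

section step

variable {α β : ℕ → ℕ} {n R N : ℕ} {T : Finset (Fin n)} {m : ℕ × ℕ → ℕ}

lemma IsTab.eq_of_top (hm : IsTab α β m) (hN : ∀ p, m p ≤ N + 1) {i j : ℕ}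
    (h : m (i, j) = N + 1) : β j ≤ i ∧ i + 1 = α j := by
  have h1 : β j ≤ i ∧ i < α j := by
    by_contra hc
    have := hm.zero_off i j hc
    omega
  refine ⟨h1.1, ?_⟩
  by_contra hc
  have := hm.col_lt i j h1.1 (by omega)
  have := hN (i + 1, j)
  omega

lemma mem_topCols_map (hn : ∀ j, n ≤ j → α j = 0) (hm : IsTab α β m) (hN : ∀ p, m p ≤ N + 1)
    (j : ℕ) : j ∈ (topCols n (N + 1) m).map Fin.valEmbedding ↔
      β j < α j ∧ m (α j - 1, j) = N + 1 := by
  simp only [Finset.mem_map, topCols, Finset.mem_filter, Finset.mem_univ, true_and,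
    Fin.valEmbedding_apply]
  constructor
  · rintro ⟨k, ⟨i, hi⟩, rfl⟩
    obtain ⟨h1, h2⟩ := hm.eq_of_top hN hi
    refine ⟨by omega, ?_⟩
    rw [← h2]
    exact hi
  · rintro ⟨h1, h2⟩
    have : j < n := by
      by_contra hc
      have := hn j (by omega)
      omega
    exact ⟨⟨j, this⟩, ⟨_, h2⟩, rfl⟩

lemma removable_topCols (hβ : Antitone β) (hn : ∀ j, n ≤ j → α j = 0)
    (hm : IsTab α β m) (hN : ∀ p, m p ≤ N + 1) : Removable α β (topCols n (N + 1) m) := by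
  have hT := mem_topCols_map hn hm hN
  refine ⟨fun j hj => ((hT j).1 hj).1, fun j hj he => (hT _).2 ?_⟩
  obtain ⟨h1, h2⟩ := (hT j).1 hj
  have hb : β (j + 1) ≤ β j := hβ (Nat.le_succ j)
  refine ⟨by omega, ?_⟩
  have := hm.row_le (α j - 1) j (by omega) (by omega) (by omega) (by omega)
  have := hN (α j - 1, j + 1)
  rw [← he]
  omega

lemma Removable.antitone (hα : Antitone α) (hT : Removable α β T) : Antitone (shrink α T) := by
  refine antitone_nat_of_succ_le fun j => ?_
  have : α (j + 1) ≤ α j := hα (Nat.le_succ j)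
  have h2 := hT.next j
  simp only [shrink]
  by_cases h : j ∈ T.map Fin.valEmbedding
  · by_cases h' : j + 1 ∈ T.map Fin.valEmbedding
    · simp only [h, h', if_true]; omega
    · simp only [h, h', if_true, if_false]
      have : α j ≠ α (j + 1) := fun he => h' (h2 h he)
      omega
  · simp only [h, if_false]; omega

/-- Forgetting the entries `N + 1`. -/
def dropTop (N : ℕ) (m : ℕ × ℕ → ℕ) : ℕ × ℕ → ℕ := fun p => if m p = N + 1 then 0 else m p

/-- Filling the bottom boxes of the columns in `T` with `N + 1`. -/
def addTop {n : ℕ} (α : ℕ → ℕ) (T : Finset (Fin n)) (N : ℕ) (m : ℕ × ℕ → ℕ) : ℕ × ℕ → ℕ :=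
  fun p => if p.2 ∈ T.map Fin.valEmbedding ∧ p.1 + 1 = α p.2 then N + 1 else m p

lemma isTab_dropTop (hn : ∀ j, n ≤ j → α j = 0) (hm : IsTab α β m) (hN : ∀ p, m p ≤ N + 1) :
    IsTab (shrink α (topCols n (N + 1) m)) β (dropTop N m) := by
  have hT := mem_topCols_map hn hm hN
  -- a box of the smaller shape is a box of `α / β` with entry different from `N + 1`
  have hbox : ∀ i j, (β j ≤ i ∧ i < shrink α (topCols n (N + 1) m) j) ↔
      (β j ≤ i ∧ i < α j ∧ m (i, j) ≠ N + 1) := by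
    intro i j
    by_cases h : j ∈ (topCols n (N + 1) m).map Fin.valEmbedding
    · rw [shrink_of_mem h]
      obtain ⟨h1, h2⟩ := (hT j).1 h
      constructor
      · rintro ⟨h3, h4⟩
        refine ⟨h3, by omega, fun h5 => ?_⟩
        have := hm.eq_of_top hN h5
        omega
      · rintro ⟨h3, h4, h5⟩
        refine ⟨h3, ?_⟩
        by_contra h6
        have : i = α j - 1 := by omega
        exact h5 (this ▸ h2)
    · rw [shrink_of_notMem h]
      constructor
      · rintro ⟨h3, h4⟩
        refine ⟨h3, h4, fun h5 => h ((hT j).2 ⟨by omega, ?_⟩)⟩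
        have := hm.eq_of_top hN h5
        rw [← this.2]
        exact h5
      · rintro ⟨h3, h4, -⟩
        exact ⟨h3, h4⟩
  constructor
  · intro i j h
    rw [hbox] at h
    simp only [dropTop]
    split_ifs with h'
    · rfl
    · exact hm.zero_off i j fun h2 => h ⟨h2.1, h2.2, h'⟩
  · intro i j h1 h2
    obtain ⟨h3, h4, h5⟩ := (hbox i j).1 ⟨h1, h2⟩
    simp only [dropTop, h5, if_false]
    exact hm.pos i j h3 h4
  · intro i j h1 h2 h1' h2'
    obtain ⟨h3, h4, h5⟩ := (hbox i j).1 ⟨h1, h2⟩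
    obtain ⟨h3', h4', h5'⟩ := (hbox i (j + 1)).1 ⟨h1', h2'⟩
    simp only [dropTop, h5, h5', if_false]
    exact hm.row_le i j h3 h4 h3' h4'
  · intro i j h1 h2
    obtain ⟨h3, h4, h5⟩ := (hbox i j).1 ⟨h1, by omega⟩
    obtain ⟨h3', h4', h5'⟩ := (hbox (i + 1) j).1 ⟨by omega, h2⟩
    simp only [dropTop, h5, h5', if_false]
    exact hm.col_lt i j h3 h4'

lemma isTab_addTop (hα : Antitone α) (hT : Removable α β T) (hm : IsTab (shrink α T) β m)
    (hN : ∀ p, m p ≤ N) : IsTab α β (addTop α T N m) := by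
  -- a box of `α / β` outside the smaller shape is the bottom box of a column in `T`
  have hbox : ∀ i j, i < α j → ¬ (j ∈ T.map Fin.valEmbedding ∧ i + 1 = α j) →
      i < shrink α T j := by
    intro i j h1 h2
    by_cases h : j ∈ T.map Fin.valEmbedding
    · rw [shrink_of_mem h]
      have : i + 1 ≠ α j := fun h3 => h2 ⟨h, h3⟩
      omega
    · rwa [shrink_of_notMem h]
  have hle : ∀ j, shrink α T j ≤ α j := fun j => Nat.sub_le _ _
  constructor
  · intro i j h
    simp only [addTop]
    split_ifs with h'
    · exact absurd ⟨by have := hT.lt j h'.1; omega, by omega⟩ h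
    · exact hm.zero_off i j fun h2 => h ⟨h2.1, by have := hle j; omega⟩
  · intro i j h1 h2
    simp only [addTop]
    split_ifs with h'
    · omega
    · exact hm.pos i j h1 (hbox i j h2 h')
  · intro i j h1 h2 h1' h2'
    simp only [addTop]
    have ha : α (j + 1) ≤ α j := hα (Nat.le_succ j)
    split_ifs with h h' h'
    · exact le_rfl
    · have he : α j = α (j + 1) := by omega
      exact absurd ⟨hT.next j h.1 he, by omega⟩ h'
    · exact (hN _).trans (Nat.le_succ _)
    · exact hm.row_le i j h1 (hbox _ _ h2 h) h1' (hbox _ _ h2' h')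
  · intro i j h1 h2
    have h : ¬ (j ∈ T.map Fin.valEmbedding ∧ i + 1 = α j) := by omega
    simp only [addTop, h, if_false]
    split_ifs with h'
    · have := hN (i, j); omega
    · exact hm.col_lt i j h1 (hbox _ _ h2 h')

lemma topCols_addTop (hT : Removable α β T) (hN : ∀ p, m p ≤ N) :
    topCols n (N + 1) (addTop α T N m) = T := by
  ext j
  rw [mem_topCols]
  simp only [addTop]
  constructor
  · rintro ⟨i, hi⟩
    split_ifs at hi with h
    · exact val_mem_map.1 h.1
    · have := hN (i, j); omega
  · intro hj
    have hj' : (j : ℕ) ∈ T.map Fin.valEmbedding := val_mem_map.2 hj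
    have := hT.lt _ hj'
    refine ⟨α j - 1, ?_⟩
    rw [if_pos ⟨hj', by omega⟩]

lemma dropTop_addTop (hm : IsTab (shrink α T) β m) (hN : ∀ p, m p ≤ N) :
    dropTop N (addTop α T N m) = m := by
  ext ⟨i, j⟩
  simp only [dropTop, addTop]
  by_cases h : j ∈ T.map Fin.valEmbedding ∧ i + 1 = α j
  · simp only [h, and_self, if_true]
    refine (hm.zero_off i j ?_).symm
    rw [shrink_of_mem h.1]
    omega
  · have := hN (i, j)
    simp only [h, if_false]
    rw [if_neg (by omega)]

lemma addTop_dropTop (hn : ∀ j, n ≤ j → α j = 0) (hm : IsTab α β m) (hN : ∀ p, m p ≤ N + 1) :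
    addTop α (topCols n (N + 1) m) N (dropTop N m) = m := by
  have hT := mem_topCols_map hn hm hN
  ext ⟨i, j⟩
  simp only [dropTop, addTop]
  by_cases h' : m (i, j) = N + 1
  · have h3 := hm.eq_of_top hN h'
    rw [if_pos ⟨(hT j).2 ⟨by omega, by rw [← h3.2]; exact h'⟩, h3.2⟩, h']
  · rw [if_neg, if_neg h']
    rintro ⟨h1, h2⟩
    have := ((hT j).1 h1).2
    rw [← h2] at this
    exact h' this

lemma weight_addTop (w : ℤ → ℕ → ℂ) (hT : Removable α β T) :
    weight w n α β (addTop α T N m) =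
      (∏ i ∈ T, w ((i : ℕ) - (α i : ℤ) + 1) (N + 1)) * weight w n (shrink α T) β m := by
  have h0 : ∏ i ∈ T, w ((i : ℕ) - (α i : ℤ) + 1) (N + 1) =
      ∏ i : Fin n, if i ∈ T then w ((i : ℕ) - (α i : ℤ) + 1) (N + 1) else 1 := by
    rw [Finset.prod_ite_mem, Finset.univ_inter]
  rw [h0, weight, weight, ← Finset.prod_mul_distrib]
  refine Finset.prod_congr rfl fun j _ => ?_
  by_cases hj : j ∈ T
  · have hj' : (j : ℕ) ∈ T.map Fin.valEmbedding := val_mem_map.2 hj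
    have hlt := hT.lt _ hj'
    obtain ⟨k, hk⟩ : ∃ k, α j = k + 1 := ⟨α j - 1, by omega⟩
    rw [shrink_of_mem hj', if_pos hj, hk, Finset.prod_Ico_succ_top (by omega), mul_comm]
    congr 1
    · simp only [addTop, hj', hk, and_self, if_true]
      congr 1
      push_cast
      ring
    · refine Finset.prod_congr (by simp) fun i hi => ?_
      have := Finset.mem_Ico.1 hi
      simp only [addTop, hk]
      rw [if_neg (by omega)]
  · have hj' : (j : ℕ) ∉ T.map Fin.valEmbedding := mt val_mem_map.1 hj
    rw [shrink_of_notMem hj', if_neg hj, one_mul]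
    refine Finset.prod_congr rfl fun i hi => ?_
    simp only [addTop, hj', false_and, if_false]

/-- Branching rule: the contribution of the tableaux with entries `≤ N + 1` whose entries `N + 1`
occupy exactly the bottom boxes of the columns in `T`. -/
lemma sum_tabs_fiber (w : ℤ → ℕ → ℂ) (hα : Antitone α) (hR : ∀ j, α j ≤ R)
    (hn : ∀ j, n ≤ j → α j = 0) (hT : Removable α β T) :
    ∑ m ∈ tabs α β R n (N + 1) with topCols n (N + 1) m = T, weight w n α β m =
      (∏ i ∈ T, w ((i : ℕ) - (α i : ℤ) + 1) (N + 1)) *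
        ∑ m ∈ tabs (shrink α T) β R n N, weight w n (shrink α T) β m := by
  have hle : ∀ j, shrink α T j ≤ α j := fun j => Nat.sub_le _ _
  have hR' : ∀ j, shrink α T j ≤ R := fun j => (hle j).trans (hR j)
  have hn' : ∀ j, n ≤ j → shrink α T j = 0 := fun j hj => by
    have := hle j; have := hn j hj; omega
  rw [Finset.mul_sum]
  symm
  refine Finset.sum_nbij' (addTop α T N) (dropTop N) ?_ ?_ ?_ ?_ ?_
  · intro m hm
    obtain ⟨h1, h2⟩ := (mem_tabs hR' hn').1 hm
    refine Finset.mem_filter.2 ⟨(mem_tabs hR hn).2 ⟨isTab_addTop hα hT h1 h2, fun p => ?_⟩,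
      topCols_addTop hT h2⟩
    have := h2 p
    simp only [addTop]
    split_ifs <;> omega
  · intro m hm
    obtain ⟨h1, rfl⟩ := Finset.mem_filter.1 hm
    obtain ⟨h1, h2⟩ := (mem_tabs hR hn).1 h1
    refine (mem_tabs hR' hn').2 ⟨isTab_dropTop hn h1 h2, fun p => ?_⟩
    have := h2 p
    simp only [dropTop]
    split_ifs <;> omega
  · intro m hm
    obtain ⟨h1, h2⟩ := (mem_tabs hR' hn').1 hm
    exact dropTop_addTop h1 h2
  · intro m hm
    obtain ⟨h1, rfl⟩ := Finset.mem_filter.1 hm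
    obtain ⟨h1, h2⟩ := (mem_tabs hR hn).1 h1
    exact addTop_dropTop hn h1 h2
  · intro m hm
    exact (weight_addTop w hT).symm

end step

/-- Base case: with no admissible entries only the empty shape has a tableau, and the matrix is the
identity for the empty shape and has a zero row otherwise. -/
lemma sum_tabs_zero (w : ℤ → ℕ → ℂ) {α β : ℕ → ℕ} {R n : ℕ} (hα : Antitone α) (hβ : Antitone β)
    (hle : ∀ j, β j ≤ α j) (hR : ∀ j, α j ≤ R) (hn : ∀ j, n ≤ j → α j = 0) :
    ∑ m ∈ tabs α β R n 0, weight w n α β m = (truncMat w n 0 (fun i => α i) β).det := by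
  by_cases hne : ∃ j, β j < α j
  · classical
    -- the first nonempty column gives a zero row
    let k := Nat.find hne
    have hk : β k < α k := Nat.find_spec hne
    have hmin : ∀ j < k, ¬ β j < α j := fun j hj => Nat.find_min hne hj
    have hkn : k < n := by
      by_contra hc
      have := hn k (by omega)
      omega
    rw [Matrix.det_eq_zero_of_row_eq_zero ⟨k, hkn⟩]
    · rw [Finset.sum_eq_zero]
      intro m hm
      obtain ⟨h1, h2⟩ := (mem_tabs hR hn).1 hm
      have := h1.pos _ k le_rfl hk
      have := h2 (β k, k)
      omega
    · intro j
      simp only [truncMat, Matrix.of_apply, truncE]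
      rw [if_neg]
      rcases lt_or_ge (j : ℕ) k with h | h
      · have := hmin j h
        have := hα h.le
        have := hle j
        omega
      · have := hβ h
        omega
  · push Not at hne
    have he : ∀ j, α j = β j := fun j => le_antisymm (hne j) (hle j)
    have h1 : truncMat w n 0 (fun i => α i) β = 1 := by
      ext i j
      simp only [truncMat, Matrix.of_apply, truncE, he, Matrix.one_apply]
      congr 1
      rw [eq_iff_iff, Fin.ext_iff]
      rcases lt_trichotomy (i : ℕ) j with h | h | h
      · have := hβ h.le; omega
      · simp [h]
      · have := hβ h.le; omega
    have h2 : tabs α β R n 0 = {fun _ => 0} := by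
      ext m
      rw [mem_tabs hR hn, Finset.mem_singleton]
      constructor
      · rintro ⟨-, h⟩
        ext p
        simpa using h p
      · rintro rfl
        refine ⟨⟨fun _ _ _ => rfl, fun i j h3 h4 => ?_, fun _ _ _ _ _ _ => le_rfl,
          fun i j h3 h4 => ?_⟩, fun _ => le_rfl⟩ <;> (have := he j; omega)
    rw [h1, h2, Finset.sum_singleton, Matrix.det_one, weight]
    exact Finset.prod_eq_one fun j _ => by simp [he]

/-- The truncated skew Jacobi–Trudi identity, for arbitrary weights constant along diagonals. -/
theorem sum_tabs_eq_det (w : ℤ → ℕ → ℂ) {R n : ℕ} {β : ℕ → ℕ} (hβ : Antitone β) (N : ℕ) :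
    ∀ {α : ℕ → ℕ}, Antitone α → (∀ j, β j ≤ α j) → (∀ j, α j ≤ R) → (∀ j, n ≤ j → α j = 0) →
    ∑ m ∈ tabs α β R n N, weight w n α β m = (truncMat w n N (fun i => α i) β).det := by
  induction N with
  | zero => exact fun hα hle hR hn => sum_tabs_zero w hα hβ hle hR hn
  | succ N ih =>
    intro α hα hle hR hn
    rw [det_truncMat_succ, ← Finset.sum_fiberwise _ (topCols n (N + 1))]
    refine Finset.sum_congr rfl fun T _ => ?_
    by_cases hT : Removable α β T
    · have hle' : ∀ j, shrink α T j ≤ α j := fun j => Nat.sub_le _ _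
      rw [sum_tabs_fiber w hα hR hn hT, ih (hT.antitone hα) ?_ ?_ ?_]
      · congr 2
        refine truncMat_congr _ _ _ _ fun i _ => ?_
        by_cases hi : i ∈ T.map Fin.valEmbedding
        · have := hT.lt i hi
          rw [shrink_of_mem hi, if_pos hi]
          omega
        · rw [shrink_of_notMem hi, if_neg hi]
          omega
      · intro j
        by_cases hi : j ∈ T.map Fin.valEmbedding
        · have := hT.lt j hi
          rw [shrink_of_mem hi]
          omega
        · rw [shrink_of_notMem hi]
          exact hle j
      · exact fun j => (hle' j).trans (hR j)
      · intro j hj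
        have := hle' j
        have := hn j hj
        omega
    · rw [Finset.sum_eq_zero, eq_comm]
      · apply mul_eq_zero_of_right
        by_cases h1 : ∀ j ∈ T.map Fin.valEmbedding, β j < α j
        · have h2 : ¬ ∀ j ∈ T.map Fin.valEmbedding, α j = α (j + 1) →
              j + 1 ∈ T.map Fin.valEmbedding := fun h2 => hT ⟨h1, h2⟩
          push Not at h2
          obtain ⟨j, hj, he, hj'⟩ := h2
          have hjn : j + 1 < n := by
            by_contra hc
            have := hn (j + 1) (by omega)
            have := h1 j hj
            omega
          -- the shape fails to be a partition, and two adjacent rows coincide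
          refine Matrix.det_zero_of_row_eq (i := ⟨j, by omega⟩) (j := ⟨j + 1, hjn⟩) (by simp) ?_
          ext k
          simp only [truncMat, Matrix.of_apply, hj, hj', if_true, if_false, he]
          congr 1
          push_cast
          ring
        · push Not at h1
          obtain ⟨j, hj, hle2⟩ := h1
          have hjn : j < n := by
            obtain ⟨k, -, rfl⟩ := Finset.mem_map.1 hj
            exact k.2
          refine det_truncMat_eq_zero_of_lt w n N _ β hβ j hjn ?_ ?_
          · simp only [hj, if_true]
            omega
          · intro k hk _
            have := hα hk.le
            split_ifs <;> omega
      · intro m hm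
        obtain ⟨h1, rfl⟩ := Finset.mem_filter.1 hm
        obtain ⟨h1, h2⟩ := (mem_tabs hR hn).1 h1
        exact absurd (removable_topCols hβ hn h1 h2) hT

/-! ### Identification of the truncated multiple zeta sums -/

open Classical in
/-- Strictly increasing `l`-tuples in `{1, …, N}`. -/
def incr (N l : ℕ) : Finset (Fin l → ℕ) :=
  (Fintype.piFinset fun _ => Finset.Icc 1 N).filter StrictMono

lemma mem_incr {N l : ℕ} {f : Fin l → ℕ} :
    f ∈ incr N l ↔ (∀ i, 1 ≤ f i ∧ f i ≤ N) ∧ StrictMono f := by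
  simp [incr, Fintype.mem_piFinset]

lemma truncE_eq_sum (w : ℤ → ℕ → ℂ) (N : ℕ) (c : ℤ) (l : ℕ) :
    truncE w N c l = ∑ f ∈ incr N l, ∏ i : Fin l, w (c - (i : ℕ)) (f i) := by
  induction N generalizing l with
  | zero =>
    rcases l with _ | l
    · have : incr 0 0 = {default} := by
        ext f
        rw [mem_incr, Finset.mem_singleton]
        exact ⟨fun _ => Subsingleton.elim _ _, fun _ => ⟨fun i => i.elim0, fun i => i.elim0⟩⟩
      simp [truncE, this]
    · have : incr 0 (l + 1) = ∅ := by
        ext f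
        simp only [mem_incr, Finset.notMem_empty, iff_false]
        intro h
        have := h.1 0
        omega
      rw [this, Finset.sum_empty, truncE, if_neg (by omega)]
  | succ N ih =>
    rcases l with _ | l
    · have : incr (N + 1) 0 = incr N 0 := by
        ext f
        rw [mem_incr, mem_incr]
        exact ⟨fun h => ⟨fun i => i.elim0, h.2⟩, fun h => ⟨fun i => i.elim0, h.2⟩⟩
      rw [truncE, ih, truncE_neg _ _ _ _ (by simp), mul_zero, add_zero, this]
    · rw [truncE, ih (l + 1), show ((l + 1 : ℕ) : ℤ) - 1 = (l : ℤ) by push_cast; ring, ih l,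
        ← Finset.sum_filter_not_add_sum_filter (incr (N + 1) (l + 1))
          fun f : Fin (l + 1) → ℕ => f (Fin.last l) = N + 1]
      congr 1
      · refine Finset.sum_congr ?_ fun _ _ => rfl
        ext f
        rw [Finset.mem_filter, mem_incr, mem_incr]
        constructor
        · rintro ⟨h1, h2⟩
          exact ⟨⟨fun i => ⟨(h1 i).1, (h1 i).2.trans (Nat.le_succ N)⟩, h2⟩,
            by have := h1 (Fin.last l); omega⟩
        · rintro ⟨⟨h1, h2⟩, h3⟩
          refine ⟨fun i => ⟨(h1 i).1, ?_⟩, h2⟩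
          have := h2.monotone (Fin.le_last i)
          have := (h1 (Fin.last l)).2
          omega
      · rw [Finset.mul_sum]
        refine Finset.sum_nbij' (fun g => Fin.snoc (α := fun _ => ℕ) g (N + 1))
          (fun f => Fin.init f) ?_ ?_ ?_ ?_ ?_
        · intro g hg
          obtain ⟨h1, h2⟩ := mem_incr.1 hg
          refine Finset.mem_filter.2 ⟨mem_incr.2 ⟨?_, ?_⟩, by simp⟩
          · intro i
            refine Fin.lastCases ?_ (fun i => ?_) i
            · simp
            · have := h1 i
              simp only [Fin.snoc_castSucc]
              omega
          · intro i j
            refine Fin.lastCases ?_ (fun j => ?_) j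
            · refine Fin.lastCases (fun h => absurd h (lt_irrefl _)) (fun i _ => ?_) i
              have := h1 i
              simp only [Fin.snoc_castSucc, Fin.snoc_last]
              omega
            · refine Fin.lastCases (fun h => ?_) (fun i h => ?_) i
              · exact absurd h (not_lt.2 (Fin.le_last _))
              · simp only [Fin.snoc_castSucc]
                exact h2 (by simpa using h)
        · intro f hf
          obtain ⟨h1, h3⟩ := Finset.mem_filter.1 hf
          obtain ⟨h1, h2⟩ := mem_incr.1 h1
          refine mem_incr.2 ⟨fun i => ⟨(h1 _).1, ?_⟩, fun i j hij => h2 (by simpa using hij)⟩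
          have := h2 (Fin.castSucc_lt_last i)
          simp only [Fin.init]
          omega
        · intro g _
          simp
        · intro f hf
          obtain ⟨-, h3⟩ := Finset.mem_filter.1 hf
          simp only [← h3]
          exact Fin.snoc_init_self f
        · intro g _
          rw [Fin.prod_univ_castSucc, mul_comm]
          simp only [Fin.snoc_castSucc, Fin.snoc_last, Fin.val_castSucc, Fin.val_last]
          congr 2
          push_cast
          ring

/-! ### Passage to the limit -/

open Filter Topology

section exhaust

variable {X : Type*} {P : X → Prop} {F : ℕ → Finset X}

lemma summable_of_exhaust (g : X → ℂ) (hF : Monotone F) (hc : ∀ x, P x → ∃ N, x ∈ F N)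
    {C : ℝ} (hC : ∀ N, ∑ x ∈ F N, ‖g x‖ ≤ C) : Summable fun x : {x // P x} => g x := by
  classical
  apply Summable.of_norm
  refine summable_of_sum_le (c := C) (fun _ => norm_nonneg _) fun u => ?_
  have h : ∃ N, ∀ x ∈ u, (x : X) ∈ F N := by
    choose k hk using hc
    exact ⟨u.sup fun x => k x x.2, fun x hx =>
      hF (Finset.le_sup (f := fun x : {x // P x} => k x x.2) hx) (hk x x.2)⟩
  obtain ⟨N, hN⟩ := h
  refine le_trans ?_ (hC N)
  refine le_trans (le_of_eq
    (Finset.sum_map u (Function.Embedding.subtype P) fun x => ‖g x‖).symm) ?_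
  refine Finset.sum_le_sum_of_subset_of_nonneg ?_ fun _ _ _ => norm_nonneg _
  intro x hx
  obtain ⟨y, hy, rfl⟩ := Finset.mem_map.1 hx
  exact hN y hy

lemma tendsto_of_exhaust (g : X → ℂ) (hF : Monotone F) (hc : ∀ x, P x → ∃ N, x ∈ F N)
    (hP : ∀ N, ∀ x ∈ F N, P x) (hs : Summable fun x : {x // P x} => g x) :
    Tendsto (fun N => ∑ x ∈ F N, g x) atTop (𝓝 (∑' x : {x // P x}, g x)) := by
  classical
  have h1 : Tendsto (fun N => (F N).subtype P) atTop atTop := by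
    refine tendsto_atTop_finset_of_monotone (fun M N h x hx => ?_) fun x => ?_
    · rw [Finset.mem_subtype] at hx ⊢
      exact hF h hx
    · obtain ⟨N, hN⟩ := hc x x.2
      exact ⟨N, Finset.mem_subtype.2 hN⟩
  refine (hs.hasSum.comp h1).congr fun N => ?_
  exact Finset.sum_subtype_of_mem g (hP N)

end exhaust

/-- The weights giving multiple zeta functions. -/
def zetaW (a : ℤ → ℂ) (c : ℤ) (m : ℕ) : ℂ := (m : ℂ) ^ (-(a c))

/-- For a strictly increasing tuple of length `l + 1`, exponents at least `1` and last exponent at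
least `1 + (l + 1) δ`, the surplus of the last exponent can be shared equally among all factors. -/
lemma prod_rpow_le (l : ℕ) (f : Fin (l + 1) → ℕ) (hf : StrictMono f) (hpos : ∀ i, 1 ≤ f i)
    (b : Fin (l + 1) → ℝ) (δ : ℝ) (hδ : 0 ≤ δ) (hb : ∀ i, 1 ≤ b i)
    (hl : 1 + (l + 1) * δ ≤ b (Fin.last l)) :
    ∏ i, (f i : ℝ) ^ (-(b i)) ≤ ∏ i, (f i : ℝ) ^ (-(1 + δ)) := by
  have h1 : ∀ i, (1 : ℝ) ≤ f i := fun i => by exact_mod_cast hpos i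
  have h0 : ∀ i, (0 : ℝ) < f i := fun i => lt_of_lt_of_le one_pos (h1 i)
  rw [Fin.prod_univ_castSucc, Fin.prod_univ_castSucc]
  set M : ℝ := (f (Fin.last l) : ℝ) with hM
  have hM0 : 0 < M := h0 _
  have hM1 : 1 ≤ M := h1 _
  have hi : ∀ i : Fin l, (f i.castSucc : ℝ) ^ (-(b i.castSucc)) ≤
      (f i.castSucc : ℝ) ^ (-(1 + δ)) * M ^ δ := by
    intro i
    have hle : (f i.castSucc : ℝ) ≤ M := by
      rw [hM]
      exact_mod_cast hf.monotone (Fin.le_last _)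
    calc (f i.castSucc : ℝ) ^ (-(b i.castSucc)) ≤ (f i.castSucc : ℝ) ^ (-(1 + δ) + δ) :=
          Real.rpow_le_rpow_of_exponent_le (h1 _) (by have := hb i.castSucc; linarith)
      _ = (f i.castSucc : ℝ) ^ (-(1 + δ)) * (f i.castSucc : ℝ) ^ δ := Real.rpow_add (h0 _) _ _
      _ ≤ _ := by
          gcongr
  calc (∏ i : Fin l, (f i.castSucc : ℝ) ^ (-(b i.castSucc))) * M ^ (-(b (Fin.last l)))
      ≤ (∏ i : Fin l, ((f i.castSucc : ℝ) ^ (-(1 + δ)) * M ^ δ)) * M ^ (-(1 + (l + 1) * δ)) := by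
        refine mul_le_mul ?_ ?_ (by positivity) (by positivity)
        · exact Finset.prod_le_prod (fun i _ => by positivity) fun i _ => hi i
        · exact Real.rpow_le_rpow_of_exponent_le hM1 (by linarith)
    _ = _ := by
        rw [Finset.prod_mul_distrib, mul_assoc, Finset.prod_const, Finset.card_univ,
          Fintype.card_fin, ← Real.rpow_natCast, ← Real.rpow_mul hM0.le, ← Real.rpow_add hM0]
        congr 2
        ring

lemma summable_mzv (l : ℕ) (s : Fin l → ℂ) (h1 : ∀ i, 1 ≤ (s i).re)
    (h2 : ∀ i : Fin l, (i : ℕ) + 1 = l → 1 < (s i).re) :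
    Summable fun f : {f : Fin l → ℕ // StrictMono f ∧ ∀ i, 0 < f i} =>
      ∏ i, (f.1 i : ℂ) ^ (-(s i)) := by
  have hmono : Monotone fun N => incr N l := fun M N h f hf => by
    obtain ⟨h3, h4⟩ := mem_incr.1 hf
    exact mem_incr.2 ⟨fun i => ⟨(h3 i).1, (h3 i).2.trans h⟩, h4⟩
  have hc : ∀ f : Fin l → ℕ, (StrictMono f ∧ ∀ i, 0 < f i) → ∃ N, f ∈ incr N l :=
    fun f hf => ⟨Finset.univ.sup f, mem_incr.2
      ⟨fun i => ⟨hf.2 i, Finset.le_sup (Finset.mem_univ i)⟩, hf.1⟩⟩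
  suffices h : ∃ C : ℝ, ∀ N, ∑ f ∈ incr N l, ‖∏ i, (f i : ℂ) ^ (-(s i))‖ ≤ C by
    obtain ⟨C, hC⟩ := h
    exact summable_of_exhaust (fun f : Fin l → ℕ => ∏ i, (f i : ℂ) ^ (-(s i))) hmono hc hC
  rcases l with _ | l
  · refine ⟨∑ f : Fin 0 → ℕ, 1, fun N => ?_⟩
    simp only [Finset.univ_eq_empty, Finset.prod_empty, norm_one]
    exact Finset.sum_le_sum_of_subset_of_nonneg (Finset.subset_univ _) (by simp)
  have hlast := h2 (Fin.last l) (by simp)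
  let δ : ℝ := ((s (Fin.last l)).re - 1) / (l + 1)
  have hδ : 0 < δ := div_pos (by linarith) (by positivity)
  have hsum : Summable fun m : ℕ => (m : ℝ) ^ (-(1 + δ)) :=
    Real.summable_nat_rpow.2 (by linarith)
  refine ⟨(∑' m : ℕ, (m : ℝ) ^ (-(1 + δ))) ^ (l + 1), fun N => ?_⟩
  calc ∑ f ∈ incr N (l + 1), ‖∏ i, (f i : ℂ) ^ (-(s i))‖
      ≤ ∑ f ∈ incr N (l + 1), ∏ i, (f i : ℝ) ^ (-(1 + δ)) := by
        refine Finset.sum_le_sum fun f hf => ?_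
        obtain ⟨h3, h4⟩ := mem_incr.1 hf
        rw [norm_prod]
        refine le_trans (le_of_eq ?_) (prod_rpow_le l f h4 (fun i => (h3 i).1)
          (fun i => (s i).re) δ hδ.le h1 ?_)
        · refine Finset.prod_congr rfl fun i _ => ?_
          rw [Complex.norm_natCast_cpow_of_pos (h3 i).1, Complex.neg_re]
        · simp only [δ]
          rw [mul_div_cancel₀ _ (by positivity)]
          linarith
    _ ≤ ∑ f ∈ Fintype.piFinset fun _ : Fin (l + 1) => Finset.Icc 1 N,
          ∏ i, (f i : ℝ) ^ (-(1 + δ)) := by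
        refine Finset.sum_le_sum_of_subset_of_nonneg (Finset.filter_subset _ _) fun f _ _ => ?_
        positivity
    _ = (∑ m ∈ Finset.Icc 1 N, (m : ℝ) ^ (-(1 + δ))) ^ (l + 1) := by
        rw [← Finset.prod_univ_sum (fun _ : Fin (l + 1) => Finset.Icc 1 N)
          (fun _ m => (m : ℝ) ^ (-(1 + δ)))]
        simp
    _ ≤ _ := by
        gcongr
        exact hsum.sum_le_tsum _ fun m _ => by positivity

lemma tendsto_truncE (a : ℤ → ℂ) (c l : ℤ)
    (h1 : ∀ t, c - l + 1 ≤ t → t ≤ c → 1 ≤ (a t).re) (h2 : 1 ≤ l → 1 < (a (c - l + 1)).re) :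
    Tendsto (fun N => truncE (zetaW a) N c l) atTop (𝓝 (mzvSeqDesc a c l)) := by
  by_cases hl : l < 0
  · simp only [truncE_neg _ _ _ _ hl, mzvSeqDesc, hl, if_true]
    exact tendsto_const_nhds
  obtain ⟨k, rfl⟩ : ∃ k : ℕ, l = k := ⟨l.toNat, by omega⟩
  have hm : mzvSeqDesc a c k = mzv fun i : Fin k => a (c - (i : ℕ)) := by
    rw [mzvSeqDesc, if_neg hl]
    rfl
  simp only [truncE_eq_sum, hm]
  refine tendsto_of_exhaust (P := fun f => StrictMono f ∧ ∀ i, 0 < f i)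
    (fun f : Fin k → ℕ => ∏ i : Fin k, zetaW a (c - (i : ℕ)) (f i)) ?_ ?_ ?_ ?_
  · intro M N h f hf
    obtain ⟨h3, h4⟩ := mem_incr.1 hf
    exact mem_incr.2 ⟨fun i => ⟨(h3 i).1, (h3 i).2.trans h⟩, h4⟩
  · exact fun f hf => ⟨Finset.univ.sup f, mem_incr.2
      ⟨fun i => ⟨hf.2 i, Finset.le_sup (Finset.mem_univ i)⟩, hf.1⟩⟩
  · intro N f hf
    obtain ⟨h3, h4⟩ := mem_incr.1 hf
    exact ⟨h4, fun i => (h3 i).1⟩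
  · refine summable_mzv k (fun i => a (c - (i : ℕ))) (fun i => h1 _ (by omega) (by omega)) ?_
    intro i hi
    have := h2 (by omega)
    rwa [show c - (k : ℤ) + 1 = c - (i : ℕ) by omega] at this

/-- If every factor of the `σ`-term of the determinant has nonnegative length, then every content
`t` occurring in the entry `(σ j, j)` is the content of a box of the diagram, and the column `σ j`
is nonempty if that entry has positive length. Indeed, wherever a content is missing the diagram
decomposes and the matrix is block triangular, so `σ` preserves the blocks. -/
lemma exists_box_of_perm {n : ℕ} {α β : ℕ → ℕ} (hα : Antitone α) (hβ : Antitone β)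
    (σ : Equiv.Perm (Fin n))
    (hσ : ∀ j, (0 : ℤ) ≤ α (σ j) - β j - (σ j : ℕ) + (j : ℕ)) (j : Fin n)
    (h1 : (1 : ℤ) ≤ α (σ j) - β j - (σ j : ℕ) + (j : ℕ)) :
    β (σ j) < α (σ j) ∧ ∀ t : ℤ, ((σ j : ℕ) : ℤ) - α (σ j) + 1 ≤ t → t ≤ (j : ℕ) - (β j : ℤ) →
      ∃ q p : ℕ, q < n ∧ β q ≤ p ∧ p < α q ∧ t = q - p := by
  -- a column `c` with `α (c + 1) ≤ β c` would make the matrix block triangular at `c`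
  have hcut : ∀ c : ℕ, (σ j : ℕ) ≤ c → c < j → β c < α (c + 1) := by
    intro c hc1 hc2
    by_contra hc
    have := perm_cut σ c ?_ j hc1
    · omega
    intro k hk
    by_contra hk'
    have h3 := hσ k
    have h4 : α (σ k) ≤ α (c + 1) := hα (by omega)
    have h5 := hβ hk
    omega
  rcases le_or_gt (j : ℕ) (σ j) with h | h
  · have h3 := hα h
    have h4 := hβ h
    refine ⟨by omega, fun t ht1 ht2 => ⟨j, ((j : ℕ) - t).toNat, j.2, ?_, ?_, ?_⟩⟩ <;> omega
  · refine ⟨?_, fun t ht1 ht2 => ?_⟩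
    · have := hcut _ le_rfl h
      have := hα (Nat.le_succ (σ j : ℕ))
      simp only [Nat.succ_eq_add_one] at this
      omega
    · -- the last column whose bottom content is at most `t`
      let Q : ℕ → Prop := fun q => (σ j : ℕ) ≤ q ∧ (q : ℤ) - α q + 1 ≤ t
      classical
      let q := Nat.findGreatest Q j
      have hq : Q q := Nat.findGreatest_spec (P := Q) h.le ⟨le_rfl, ht1⟩
      have hqj : q ≤ j := Nat.findGreatest_le _
      obtain ⟨hq1, hq2⟩ := hq
      have hq3 : t ≤ q - (β q : ℤ) := by
        rcases hqj.eq_or_lt with he | hlt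
        · rw [he]; exact ht2
        · have h5 : ¬ Q (q + 1) := Nat.findGreatest_is_greatest (Nat.lt_succ_self _) hlt
          have h6 := hcut q hq1 hlt
          have h7 : ¬ (((q + 1 : ℕ) : ℤ) - α (q + 1) + 1 ≤ t) := fun h => h5 ⟨by omega, h⟩
          push_cast at h7
          omega
      have := j.2
      refine ⟨q, ((q : ℤ) - t).toNat, by omega, ?_, ?_, ?_⟩ <;> omega

lemma tendsto_det (a : ℤ → ℂ) (n : ℕ) {α β : ℕ → ℕ} (hα : Antitone α) (hβ : Antitone β)
    (h1 : ∀ i j, j < n → β j ≤ i → i < α j → 1 ≤ (a (j - i)).re)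
    (h2 : ∀ j, j < n → β j < α j → 1 < (a (j - α j + 1)).re) :
    Tendsto (fun N => (truncMat (zetaW a) n N (fun i => α i) β).det) atTop
      (𝓝 (Matrix.det (Matrix.of fun i j : Fin n => mzvSeqDesc a ((j : ℕ) - β j)
        (α i - β j - (i : ℕ) + (j : ℕ))))) := by
  simp only [Matrix.det_apply]
  refine tendsto_finsetSum _ fun σ _ => ?_
  refine Tendsto.const_smul ?_ _
  simp only [truncMat, Matrix.of_apply]
  by_cases hσ : ∀ j, (0 : ℤ) ≤ α (σ j) - β j - (σ j : ℕ) + (j : ℕ)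
  · refine tendsto_finsetProd _ fun j _ => ?_
    have hbox := exists_box_of_perm hα hβ σ hσ j
    apply tendsto_truncE
    · intro t ht1 ht2
      obtain ⟨q, p, hq, hp1, hp2, rfl⟩ := (hbox (by omega)).2 t (by omega) ht2
      exact h1 p q hq hp1 hp2
    · intro hl
      have := h2 _ (σ j).2 (hbox hl).1
      convert this using 3
      ring
  · push Not at hσ
    obtain ⟨j, hj⟩ := hσ
    have e1 : ∀ N, ∏ i : Fin n, truncE (zetaW a) N ((i : ℕ) - β i)
        (α (σ i) - β i - (σ i : ℕ) + (i : ℕ)) = 0 := fun N =>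
      Finset.prod_eq_zero (Finset.mem_univ j) (truncE_neg _ _ _ _ hj)
    have e2 : ∏ i : Fin n, mzvSeqDesc a ((i : ℕ) - β i)
        (α (σ i) - β i - (σ i : ℕ) + (i : ℕ)) = 0 :=
      Finset.prod_eq_zero (Finset.mem_univ j) (by rw [mzvSeqDesc, if_pos hj])
    simp only [e1, e2]
    exact tendsto_const_nhds

/-- The Jacobi–Trudi formula in terms of column heights. Absolute convergence of the sum over
tableaux comes from the truncated identity for the exponents `Re a`: the partial sums of the
absolute values are determinants that converge. -/
theorem tsum_isTab_eq_det (a : ℤ → ℂ) {R n : ℕ} {α β : ℕ → ℕ} (hα : Antitone α)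
    (hβ : Antitone β) (hle : ∀ j, β j ≤ α j) (hR : ∀ j, α j ≤ R) (hn : ∀ j, n ≤ j → α j = 0)
    (h1 : ∀ i j, j < n → β j ≤ i → i < α j → 1 ≤ (a (j - i)).re)
    (h2 : ∀ j, j < n → β j < α j → 1 < (a (j - α j + 1)).re) :
    ∑' m : {m // IsTab α β m}, weight (zetaW a) n α β m =
      Matrix.det (Matrix.of fun i j : Fin n => mzvSeqDesc a ((j : ℕ) - β j)
        (α i - β j - (i : ℕ) + (j : ℕ))) := by
  have hmono : Monotone fun N => tabs α β R n N := fun M N h m hm => by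
    obtain ⟨h3, h4⟩ := (mem_tabs hR hn).1 hm
    exact (mem_tabs hR hn).2 ⟨h3, fun p => (h4 p).trans h⟩
  have hc : ∀ m, IsTab α β m → ∃ N, m ∈ tabs α β R n N := fun m hm => by
    refine ⟨(Finset.range R ×ˢ Finset.range n).sup m, (mem_tabs hR hn).2 ⟨hm, ?_⟩⟩
    rintro ⟨i, j⟩
    by_cases hb : β j ≤ i ∧ i < α j
    · refine Finset.le_sup (f := m) ?_
      have := hR j
      have h5 : ¬ n ≤ j := fun h => by have := hn j h; omega
      simp only [Finset.mem_product, Finset.mem_range]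
      omega
    · rw [hm.zero_off i j hb]
      exact Nat.zero_le _
  have hP : ∀ N, ∀ m ∈ tabs α β R n N, IsTab α β m := fun N m hm =>
    ((mem_tabs hR hn).1 hm).1
  have hs : Summable fun m : {m // IsTab α β m} => weight (zetaW a) n α β m := by
    let b : ℤ → ℂ := fun c => ((a c).re : ℂ)
    have hlim := (tendsto_det b n hα hβ (by simpa [b] using h1) (by simpa [b] using h2)).norm
    obtain ⟨C, hC⟩ := hlim.bddAbove_range
    refine summable_of_exhaust (weight (zetaW a) n α β) hmono hc (C := C) fun N => ?_
    refine le_trans (le_of_eq ?_) (hC ⟨N, rfl⟩)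
    simp only
    rw [← sum_tabs_eq_det (zetaW b) hβ N hα hle hR hn]
    have e : ∀ m ∈ tabs α β R n N, weight (zetaW b) n α β m =
        ((‖weight (zetaW a) n α β m‖ : ℝ) : ℂ) := by
      intro m hm
      simp only [weight, norm_prod, Complex.ofReal_prod]
      refine Finset.prod_congr rfl fun j _ => Finset.prod_congr rfl fun i hi => ?_
      obtain ⟨hi1, hi2⟩ := Finset.mem_Ico.1 hi
      have hpos := (hP N m hm).pos i j hi1 hi2
      simp only [zetaW, b]
      rw [Complex.norm_natCast_cpow_of_pos hpos, Complex.ofReal_cpow (by positivity)]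
      simp
    rw [Finset.sum_congr rfl e, ← Complex.ofReal_sum, Complex.norm_real, Real.norm_of_nonneg]
    exact Finset.sum_nonneg fun _ _ => norm_nonneg _
  have hlim := tendsto_of_exhaust (weight (zetaW a) n α β) hmono hc hP hs
  simp only [sum_tabs_eq_det (zetaW a) hβ _ hα hle hR hn] at hlim
  exact tendsto_nhds_unique hlim (tendsto_det a n hα hβ h1 h2)

/-! ### Conjugation -/

lemma lt_conjPart_iff {r : ℕ} {lam : ℕ → ℕ} (h : Antitone lam) (hr : ∀ i, r ≤ i → lam i = 0)
    (i j : ℕ) : i < conjPart r lam j ↔ j < lam i := by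
  classical
  have hex : ∃ k, lam k ≤ j := ⟨r, by rw [hr r le_rfl]; exact Nat.zero_le _⟩
  have hk : ∀ k, k < Nat.find hex ↔ j < lam k := by
    intro k
    constructor
    · intro hk
      exact not_le.1 (Nat.find_min hex hk)
    · intro hk
      by_contra hc
      have := h (not_lt.1 hc)
      have := Nat.find_spec hex
      omega
  have hset : (Finset.range r).filter (fun i => j < lam i) = Finset.range (Nat.find hex) := by
    ext k
    simp only [Finset.mem_filter, Finset.mem_range, hk, and_iff_right_iff_imp]
    intro h'
    by_contra hc
    have := hr k (by omega)
    omega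
  rw [conjPart, hset, Finset.card_range, hk]

end SMZ.JacobiTrudi

/-- Skew Jacobi–Trudi formula of `E`-type for Schur multiple zeta functions. -/
theorem skewSchurZeta_jacobiTrudi_E
    (r : ℕ) (lam mu : ℕ → ℕ) (hlm : SMZ.IsSkewPairWith r lam mu)
    (s : ℕ × ℕ → ℂ) (a : ℤ → ℂ)
    (hW : SMZ.MemWSkew lam mu s)
    (hdiag : ∀ p : ℕ × ℕ, SMZ.InSkew lam mu p → s p = a ((p.2 : ℤ) - (p.1 : ℤ)))
    (hre : ∀ i < lam 0, 1 < (s (SMZ.conjPart r lam i - 1, i)).re) :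
    SMZ.skewSchurZeta r lam mu s =
      Matrix.det (Matrix.of fun i j : Fin (lam 0) =>
        SMZ.mzvSeqDesc a (((j : ℕ) : ℤ) - (SMZ.conjPart r mu (j : ℕ) : ℤ))
          ((SMZ.conjPart r lam (i : ℕ) : ℤ) - (SMZ.conjPart r mu (j : ℕ) : ℤ)
            - ((i : ℕ) : ℤ) + ((j : ℕ) : ℤ))) := by
  obtain ⟨hl, hm, hml, hr⟩ := hlm
  have hr' : ∀ i, r ≤ i → mu i = 0 := fun i hi => by
    have := hml i; have := hr i hi; omega
  have hα := SMZ.JacobiTrudi.lt_conjPart_iff hl hr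
  have hβ := SMZ.JacobiTrudi.lt_conjPart_iff hm hr'
  set α : ℕ → ℕ := SMZ.conjPart r lam with hαdef
  set β : ℕ → ℕ := SMZ.conjPart r mu with hβdef
  have hbox : ∀ i j, SMZ.InSkew lam mu (i, j) ↔ β j ≤ i ∧ i < α j := by
    intro i j
    have := hα i j
    have := hβ i j
    simp only [SMZ.InSkew]
    omega
  have hαanti : Antitone α := by
    intro j k hjk
    by_contra hc
    have h1 := (hα (α j) k).1 (by omega)
    have h2 := (hα (α j) j).2 (by omega)
    omega
  have hβanti : Antitone β := by
    intro j k hjk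
    by_contra hc
    have h1 := (hβ (β j) k).1 (by omega)
    have h2 := (hβ (β j) j).2 (by omega)
    omega
  have hle : ∀ j, β j ≤ α j := by
    intro j
    by_contra hc
    have h1 := (hβ (α j) j).1 (by omega)
    have h2 := (hα (α j) j).2 (h1.trans_le (hml _))
    omega
  have hR : ∀ j, α j ≤ r := by
    intro j
    by_contra hc
    have h1 := (hα r j).1 (by omega)
    have := hr r le_rfl
    omega
  have hn : ∀ j, lam 0 ≤ j → α j = 0 := by
    intro j hj
    by_contra hc
    have h1 := (hα 0 j).1 (by omega)
    omega
  have htab : ∀ m, SMZ.IsSkewSSYT lam mu m ↔ SMZ.JacobiTrudi.IsTab α β m := by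
    intro m
    constructor
    · rintro ⟨h1, h2, h3, h4⟩
      refine ⟨fun i j h => h1 _ (mt (hbox i j).1 h), fun i j h h' => h2 _ ((hbox i j).2 ⟨h, h'⟩),
        fun i j h h' k k' => h3 _ _ ((hbox _ _).2 ⟨h, h'⟩) ((hbox _ _).2 ⟨k, k'⟩),
        fun i j h h' => h4 _ _ ((hbox _ _).2 ⟨h, by omega⟩) ((hbox _ _).2 ⟨by omega, h'⟩)⟩
    · rintro ⟨h1, h2, h3, h4⟩
      refine ⟨fun p h => h1 p.1 p.2 (mt (hbox p.1 p.2).2 h), fun p h => ?_, fun i j h k => ?_,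
        fun i j h k => ?_⟩
      · have := (hbox p.1 p.2).1 h
        exact h2 _ _ this.1 this.2
      · have h' := (hbox _ _).1 h
        have k' := (hbox _ _).1 k
        exact h3 _ _ h'.1 h'.2 k'.1 k'.2
      · have h' := (hbox _ _).1 h
        have k' := (hbox _ _).1 k
        exact h4 _ _ h'.1 k'.2
  have hterm : ∀ m, SMZ.skewTerm r lam mu s m =
      SMZ.JacobiTrudi.weight (SMZ.JacobiTrudi.zetaW a) (lam 0) α β m := by
    intro m
    rw [SMZ.skewTerm, SMZ.JacobiTrudi.weight, Finset.prod_comm' (s' := fun j =>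
      Finset.Ico (β j) (α j)) (t' := Finset.range (lam 0)), Finset.prod_range]
    · refine Finset.prod_congr rfl fun j _ => Finset.prod_congr rfl fun i hi => ?_
      rw [hdiag (i, j) ((hbox i j).2 (Finset.mem_Ico.1 hi))]
      rfl
    · intro i j
      have h1 := hbox i j
      simp only [SMZ.InSkew] at h1
      simp only [Finset.mem_range, Finset.mem_Ico]
      have := hR j
      have := hn j
      omega
  rw [← SMZ.JacobiTrudi.tsum_isTab_eq_det a hαanti hβanti hle hR hn, SMZ.skewSchurZeta]
  · simp only [hterm]
    exact Equiv.tsum_eq (Equiv.subtypeEquivRight htab) fun m : {m // SMZ.JacobiTrudi.IsTab α β m} =>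
      SMZ.JacobiTrudi.weight (SMZ.JacobiTrudi.zetaW a) (lam 0) α β m.1
  · intro i j _ h1 h2
    have hb := (hbox i j).2 ⟨h1, h2⟩
    have := hW.1 _ hb
    rwa [hdiag _ hb] at this
  · intro j hj hlt
    have hb := (hbox (α j - 1) j).2 ⟨by omega, by omega⟩
    have := hre j hj
    rw [hdiag _ hb] at this
    convert this using 3
    simp only
    omega
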